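/- Every simple graph with maximum degree Δ admits a proper edge coloring using at most Δ + 1 colors. -/

import Mathlib

/-!
Vertices are added one at a time. A proper edge coloring of `G - x` extends to `G` as soon as the
neighbors of `x` can be assigned distinct colors, each missing at its vertex, and such an assignment
is built up neighbor by neighbor.

Suppose all neighbors but `f`, the hole, have been assigned a color, and that `α` is unassigned. If
a color missing at the hole is assigned to `h`, then it can be handed over to the hole, and `h`
becomes the new hole; let `W` be the set of vertices that become the hole in this way. If the
assignment can never be completed, then every color missing at a hole is assigned, and a hole
missing `β` lies in the same `α`-`β` Kempe component as the vertex holding `β`: otherwise swapping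
`α` and `β` on the component of the hole would allow it to take `α`. Now choose for each vertex of
`W` a missing color other than its own. Its initial holder lies in `W \ {f}`, so by pigeonhole two
vertices of `W` choose the same color `β`. Together with the initial holder of `β`, they are three
vertices missing `β` in the same `α`-`β` component. But this component is a path or a cycle, and
a vertex missing `β` has degree at most one in it.
-/

open Finset Function

namespace Vizing

variable {V C : Type*}

section Leaves

variable [Fintype V] {G : SimpleGraph V} [DecidableRel G.Adj]

theorem card_degree_le_one_le_two_of_connected (hG : G.Connected) (hdeg : ∀ v, G.degree v ≤ 2) :
    #{v | G.degree v ≤ 1} ≤ 2 := by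
  have card_le : Fintype.card V ≤ #G.edgeFinset + 1 := by
    simpa only [Nat.card_eq_fintype_card, G.card_edgeSet] using
      hG.card_vert_le_card_edgeSet_add_one
  have sum_le : ∑ v, (G.degree v + if G.degree v ≤ 1 then 1 else 0) ≤ ∑ _v : V, 2 :=
    sum_le_sum fun v _ ↦ by have := hdeg v; split_ifs <;> omega
  rw [sum_add_distrib, G.sum_degrees_eq_twice_card_edges, ← card_filter, sum_const, card_univ,
    smul_eq_mul] at sum_le
  omega

theorem card_degree_le_one_le_two (hdeg : ∀ v, G.degree v ≤ 2) (K : G.ConnectedComponent)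
    [DecidablePred (· ∈ K.supp)] : #{v | v ∈ K.supp ∧ G.degree v ≤ 1} ≤ 2 := by
  have degree_eq (v : K.supp) : (G.induce K.supp).degree v = G.degree v :=
    G.degree_induce_of_neighborSet_subset fun w hw ↦ (K.mem_supp_congr_adj hw).1 v.2
  calc #{v | v ∈ K.supp ∧ G.degree v ≤ 1}
      = #(({v | (G.induce K.supp).degree v ≤ 1} : Finset K.supp).map (Embedding.subtype _)) := by
        congr 1
        ext v
        simp only [degree_eq, mem_filter, mem_univ, true_and, mem_map, Subtype.exists,
          Embedding.subtype_apply]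
        grind
    _ ≤ 2 := by
        rw [card_map]
        exact card_degree_le_one_le_two_of_connected K.connected_toSimpleGraph
          fun v ↦ (degree_eq v).trans_le (hdeg v)

end Leaves

/-- `c` is a proper edge coloring of `G`. It is defined on all of `Sym2 V`, so that the same map can
be used for several graphs on `V`; its values outside the edge set are irrelevant. -/
def IsProperEdgeColoring (G : SimpleGraph V) (c : Sym2 V → C) : Prop :=
  ∀ ⦃v w w'⦄, G.Adj v w → G.Adj v w' → c s(v, w) = c s(v, w') → w = w'

/-- The colors that do not occur on the edges at `v`. -/
def missingColors (G : SimpleGraph V) (c : Sym2 V → C) (v : V) : Set C :=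
  {a | ∀ w, G.Adj v w → c s(v, w) ≠ a}

/-- The subgraph of the edges of color `α` or `β`, whose components are the Kempe chains. -/
def kempeGraph (G : SimpleGraph V) (c : Sym2 V → C) (α β : C) : SimpleGraph V where
  Adj v w := G.Adj v w ∧ (c s(v, w) = α ∨ c s(v, w) = β)
  symm.symm v w h := by rwa [G.adj_comm, Sym2.eq_swap]
  loopless.irrefl v h := h.1.ne rfl

open Classical in
/-- The coloring `c` with the colors `α` and `β` exchanged on the Kempe component `K`. -/
noncomputable def kempeSwap [DecidableEq C] {G : SimpleGraph V} {c : Sym2 V → C} {α β : C}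
    (K : (kempeGraph G c α β).ConnectedComponent) (e : Sym2 V) : C :=
  if ∃ v ∈ e, v ∈ K then Equiv.swap α β (c e) else c e

/-- `φ` assigns distinct colors to the vertices of `N`, each missing at its vertex. -/
structure IsMissingTransversal (G : SimpleGraph V) (c : Sym2 V → C) (N : Set V) (φ : V → C) :
    Prop where
  mem_missingColors : ∀ v ∈ N, φ v ∈ missingColors G c v
  injOn : Set.InjOn φ N

/-- The graph `G` has a proper edge coloring that would extend to an additional vertex with
neighborhood `N`. -/
def IsExtendable (G : SimpleGraph V) (C : Type*) (N : Set V) : Prop :=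
  ∃ (c : Sym2 V → C) (φ : V → C), IsProperEdgeColoring G c ∧ IsMissingTransversal G c N φ

section Missing

variable {G : SimpleGraph V} {c : Sym2 V → C} {v : V}

theorem IsProperEdgeColoring.degree_kempeGraph_le_two (hc : IsProperEdgeColoring G c) (α β : C)
    [Fintype ((kempeGraph G c α β).neighborSet v)] : (kempeGraph G c α β).degree v ≤ 2 := by
  classical
  refine (card_le_card_of_injOn (t := {α, β}) (fun w ↦ c s(v, w)) ?_ ?_).trans card_le_two
  · intro w hw
    simpa using ((SimpleGraph.mem_neighborFinset _ _ _).1 hw).2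
  · intro w hw w' hw'
    exact hc ((SimpleGraph.mem_neighborFinset _ _ _).1 hw).1
      ((SimpleGraph.mem_neighborFinset _ _ _).1 hw').1

theorem IsProperEdgeColoring.degree_kempeGraph_le_one (hc : IsProperEdgeColoring G c) {α β : C}
    [Fintype ((kempeGraph G c α β).neighborSet v)] (hβ : β ∈ missingColors G c v) :
    (kempeGraph G c α β).degree v ≤ 1 := by
  have color_eq {w : V} (hw : (kempeGraph G c α β).Adj v w) : c s(v, w) = α :=
    hw.2.resolve_right (hβ w hw.1)
  refine card_le_one.2 fun w hw w' hw' ↦ ?_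
  rw [SimpleGraph.mem_neighborFinset] at hw hw'
  exact hc hw.1 hw'.1 ((color_eq hw).trans (color_eq hw').symm)

theorem nontrivial_missingColors [Fintype C] [Fintype (G.neighborSet v)] (c : Sym2 V → C)
    (hv : G.degree v + 1 < Fintype.card C) : (missingColors G c v).Nontrivial := by
  classical
  set present : Finset C := (G.neighborFinset v).image fun w ↦ c s(v, w)
  have missing_eq : missingColors G c v = ((presentᶜ : Finset C) : Set C) := by
    ext a
    simp [missingColors, present]
  have card_present : #present ≤ G.degree v := card_image_le
  rw [missing_eq, nontrivial_coe, ← one_lt_card_iff_nontrivial, card_compl]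
  omega

end Missing

section KempeSwap

variable [DecidableEq C] {G : SimpleGraph V} {c : Sym2 V → C} {α β : C}
  {K : (kempeGraph G c α β).ConnectedComponent} {v w : V}

theorem kempeSwap_of_mem (hv : v ∈ K) : kempeSwap K s(v, w) = Equiv.swap α β (c s(v, w)) := by
  rw [kempeSwap]
  exact if_pos ⟨v, Sym2.mem_mk_left v w, hv⟩

-- An edge with one end outside `K` can only touch `K` if its color is neither `α` nor `β`.
theorem kempeSwap_of_notMem (hv : v ∉ K) (hvw : G.Adj v w) : kempeSwap K s(v, w) = c s(v, w) := by
  simp only [kempeSwap, ite_eq_right_iff]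
  rintro ⟨u, hu, huK⟩
  obtain rfl | rfl := Sym2.mem_iff.1 hu
  · exact absurd huK hv
  have notAdj : ¬(kempeGraph G c α β).Adj v u := fun h ↦ hv ((K.mem_supp_congr_adj h).2 huK)
  have color_ne : c s(v, u) ≠ α ∧ c s(v, u) ≠ β := by
    rw [← not_or]
    exact fun h ↦ notAdj ⟨hvw, h⟩
  exact Equiv.swap_apply_of_ne_of_ne color_ne.1 color_ne.2

theorem IsProperEdgeColoring.kempeSwap (hc : IsProperEdgeColoring G c)
    (K : (kempeGraph G c α β).ConnectedComponent) : IsProperEdgeColoring G (kempeSwap K) := by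
  intro v w w' hw hw' h
  by_cases hv : v ∈ K
  · rw [kempeSwap_of_mem hv, kempeSwap_of_mem hv] at h
    exact hc hw hw' ((Equiv.swap α β).injective h)
  · rw [kempeSwap_of_notMem hv hw, kempeSwap_of_notMem hv hw'] at h
    exact hc hw hw' h

theorem mem_missingColors_kempeSwap_of_mem {a : C} (hv : v ∈ K) :
    a ∈ missingColors G (kempeSwap K) v ↔ Equiv.swap α β a ∈ missingColors G c v := by
  refine forall₂_congr fun w _ ↦ ?_
  rw [kempeSwap_of_mem hv, ne_eq, Equiv.swap_apply_eq_iff]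

theorem missingColors_kempeSwap_of_notMem (hv : v ∉ K) :
    missingColors G (kempeSwap K) v = missingColors G c v := by
  ext a
  refine forall₂_congr fun w hw ↦ ?_
  rw [kempeSwap_of_notMem hv hw]

end KempeSwap

section Transversal

variable {G : SimpleGraph V} {c : Sym2 V → C} {N : Set V} {φ : V → C} {g : V}

theorem IsMissingTransversal.update [DecidableEq V] {a : C}
    (hφ : IsMissingTransversal G c (N \ {g}) φ) (ha : a ∈ missingColors G c g)
    (haφ : a ∉ φ '' (N \ {g})) : IsMissingTransversal G c N (update φ g a) where
  mem_missingColors v hv := by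
    by_cases hvg : v = g
    · simpa [hvg] using ha
    · simpa [hvg] using hφ.mem_missingColors v ⟨hv, hvg⟩
  injOn v hv w hw h := by
    have hinj := @hφ.injOn v
    simp only [update_apply] at h
    grind

theorem IsMissingTransversal.isExtendable_of_notMem_image {a : C} (hc : IsProperEdgeColoring G c)
    (hφ : IsMissingTransversal G c (N \ {g}) φ) (ha : a ∈ missingColors G c g)
    (haφ : a ∉ φ '' (N \ {g})) : IsExtendable G C N := by
  classical
  exact ⟨c, _, hc, hφ.update ha haφ⟩

theorem IsMissingTransversal.isExtendable_of_not_reachable {α : C} {h : V}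
    (hc : IsProperEdgeColoring G c) (hφ : IsMissingTransversal G c (N \ {g}) φ)
    (hα : α ∉ φ '' (N \ {g})) (hh : h ∈ N \ {g}) (hhg : φ h ∈ missingColors G c g)
    (hgh : ¬(kempeGraph G c α (φ h)).Reachable g h) : IsExtendable G C N := by
  classical
  let K := (kempeGraph G c α (φ h)).connectedComponentMk g
  have hgK : g ∈ K := rfl
  have hhK : h ∉ K := fun hK ↦ hgh (SimpleGraph.ConnectedComponent.exact hK).symm
  refine IsMissingTransversal.isExtendable_of_notMem_image (c := kempeSwap K) (a := α)
    (hc.kempeSwap K) ⟨fun v hv ↦ ?_, hφ.injOn⟩ ?_ hα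
  · by_cases hvK : v ∈ K
    · have ne_α : φ v ≠ α := fun h ↦ hα ⟨v, hv, h⟩
      have ne_β : φ v ≠ φ h := fun hvh ↦ hhK (hφ.injOn hv hh hvh ▸ hvK)
      rw [mem_missingColors_kempeSwap_of_mem hvK, Equiv.swap_apply_of_ne_of_ne ne_α ne_β]
      exact hφ.mem_missingColors v hv
    · rw [missingColors_kempeSwap_of_notMem hvK]
      exact hφ.mem_missingColors v hv
  · rwa [mem_missingColors_kempeSwap_of_mem hgK, Equiv.swap_apply_left]

end Transversal

/-- `Shifts G c N φ f ψ g` says that the assignment `φ` on `N \ {f}` can be turned into the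
assignment `ψ` on `N \ {g}` by repeatedly handing over to the hole a color that is missing there,
the previous holder becoming the new hole. -/
inductive Shifts [DecidableEq V] (G : SimpleGraph V) (c : Sym2 V → C) (N : Set V) (φ : V → C)
    (f : V) : (V → C) → V → Prop
  | refl : Shifts G c N φ f φ f
  | step {ψ : V → C} {g h : V} (hs : Shifts G c N φ f ψ g) (hh : h ∈ N \ {g})
      (hhg : ψ h ∈ missingColors G c g) : Shifts G c N φ f (update ψ g (ψ h)) h

namespace Shifts

variable [DecidableEq V] {G : SimpleGraph V} {c : Sym2 V → C} {N : Set V} {φ ψ : V → C} {f g : V}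

theorem hole_mem (hs : Shifts G c N φ f ψ g) (hf : f ∈ N) : g ∈ N := by
  cases hs with
  | refl => exact hf
  | step _ hh _ => exact hh.1

theorem isMissingTransversal (hs : Shifts G c N φ f ψ g)
    (hφ : IsMissingTransversal G c (N \ {f}) φ) : IsMissingTransversal G c (N \ {g}) ψ := by
  induction hs with
  | refl => exact hφ
  | @step ψ g h _ hh hhg ih =>
    have subset : (N \ {h}) \ {g} ⊆ N \ {g} := Set.sdiff_subset_sdiff_left Set.sdiff_subset
    have restricted : IsMissingTransversal G c ((N \ {h}) \ {g}) ψ :=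
      ⟨fun v hv ↦ ih.mem_missingColors v (subset hv), ih.injOn.mono subset⟩
    refine restricted.update hhg ?_
    rintro ⟨v, hv, hvh⟩
    exact hv.1.2 (ih.injOn (subset hv) hh hvh)

theorem image_eq (hs : Shifts G c N φ f ψ g) (hf : f ∈ N) :
    ψ '' (N \ {g}) = φ '' (N \ {f}) := by
  induction hs with
  | refl => rfl
  | @step ψ g h hs hh _ ih =>
    rw [← ih]
    have hg : g ∈ N \ {h} := ⟨hs.hole_mem hf, fun hgh ↦ hh.2 hgh.symm⟩
    apply Set.Subset.antisymm
    · rintro _ ⟨v, hv, rfl⟩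
      by_cases hvg : v = g
      · exact ⟨h, hh, by rw [hvg, update_self]⟩
      · exact ⟨v, ⟨hv.1, hvg⟩, by rw [update_of_ne hvg]⟩
    · rintro _ ⟨v, hv, rfl⟩
      by_cases hvh : v = h
      · exact ⟨g, hg, by rw [hvh, update_self]⟩
      · exact ⟨v, ⟨hv.1, hvh⟩, by rw [update_of_ne hv.2]⟩

theorem apply_eq_of_forall_not_shifts {v : V} (hs : Shifts G c N φ f ψ g)
    (hv : ∀ ψ', ¬Shifts G c N φ f ψ' v) : ψ v = φ v := by
  induction hs with
  | refl => rfl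
  | @step ψ g h hs _ _ ih =>
    have hvg : v ≠ g := fun h ↦ hv ψ (h ▸ hs)
    rw [update_of_ne hvg, ih]

theorem exists_shifts_of_mem_missingColors {v : V} (hs : Shifts G c N φ f ψ g) (hv : v ∈ N)
    (hvg : φ v ∈ missingColors G c g) : ∃ ψ', Shifts G c N φ f ψ' v := by
  by_contra! hnot
  have hne : v ≠ g := fun h ↦ hnot ψ (h ▸ hs)
  refine hnot _ (hs.step ⟨hv, hne⟩ ?_)
  rwa [hs.apply_eq_of_forall_not_shifts hnot]

theorem reachable_of_apply_eq {α : C} {v w : V} (hs : Shifts G c N φ f ψ g)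
    (hc : IsProperEdgeColoring G c) (hφ : IsMissingTransversal G c (N \ {f}) φ) (hf : f ∈ N)
    (hα : α ∉ φ '' (N \ {f})) (hN : ¬IsExtendable G C N) (hv : v ∈ N \ {f}) (hw : w ∈ N \ {g})
    (hwv : ψ w = φ v) : (kempeGraph G c α (φ v)).Reachable v w := by
  induction hs generalizing w with
  | refl => rw [hφ.injOn hw hv hwv]
  | @step ψ g h hs hh hhg ih =>
    by_cases hwg : w = g
    · have hhv : ψ h = φ v := by rwa [hwg, update_self] at hwv
      have hgh : (kempeGraph G c α (φ v)).Reachable g h := by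
        by_contra hgh
        rw [← hhv] at hgh
        exact hN ((hs.isMissingTransversal hφ).isExtendable_of_not_reachable hc
          (hs.image_eq hf ▸ hα) hh hhg hgh)
      exact hwg ▸ (ih hh hhv).trans hgh.symm
    · rw [update_of_ne hwg] at hwv
      exact ih ⟨hw.1, hwg⟩ hwv

theorem reachable_hole {α : C} {v : V} (hs : Shifts G c N φ f ψ g)
    (hc : IsProperEdgeColoring G c) (hφ : IsMissingTransversal G c (N \ {f}) φ) (hf : f ∈ N)
    (hα : α ∉ φ '' (N \ {f})) (hN : ¬IsExtendable G C N) (hv : v ∈ N \ {f})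
    (hvg : φ v ∈ missingColors G c g) : (kempeGraph G c α (φ v)).Reachable v g := by
  obtain ⟨w, hw, hwv⟩ : φ v ∈ ψ '' (N \ {g}) := hs.image_eq hf ▸ Set.mem_image_of_mem φ hv
  refine (hs.reachable_of_apply_eq hc hφ hf hα hN hv hw hwv).trans ?_
  by_contra hwg
  rw [← hwv] at hvg hwg
  exact hN ((hs.isMissingTransversal hφ).isExtendable_of_not_reachable hc
    (hs.image_eq hf ▸ hα) hw hvg fun h ↦ hwg h.symm)

theorem exists_holder (hs : Shifts G c N φ f ψ g) (hc : IsProperEdgeColoring G c)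
    (hφ : IsMissingTransversal G c (N \ {f}) φ) (hf : f ∈ N) (hN : ¬IsExtendable G C N)
    (hmissing : (missingColors G c g).Nontrivial) :
    ∃ v ∈ N \ {f}, φ v ∈ missingColors G c g ∧ φ v ≠ φ g := by
  obtain ⟨a, ha, hag⟩ := hmissing.exists_ne (φ g)
  have a_assigned : a ∈ φ '' (N \ {f}) := by
    by_contra haφ
    exact hN ((hs.isMissingTransversal hφ).isExtendable_of_notMem_image hc ha
      (hs.image_eq hf ▸ haφ))
  obtain ⟨v, hv, rfl⟩ := a_assigned
  exact ⟨v, hv, ha, hag⟩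

end Shifts

theorem IsProperEdgeColoring.eq_of_reachable_of_reachable [Finite V] {G : SimpleGraph V}
    {c : Sym2 V → C} {α β : C} {u v w : V} (hc : IsProperEdgeColoring G c)
    (hu : β ∈ missingColors G c u) (hv : β ∈ missingColors G c v) (hw : β ∈ missingColors G c w)
    (huv : (kempeGraph G c α β).Reachable u v) (huw : (kempeGraph G c α β).Reachable u w)
    (hne_v : u ≠ v) (hne_w : u ≠ w) : v = w := by
  classical
  have := Fintype.ofFinite V
  by_contra hvw
  let K := (kempeGraph G c α β).connectedComponentMk u
  have ends_subset : {u, v, w} ⊆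
      ({x | x ∈ K.supp ∧ (kempeGraph G c α β).degree x ≤ 1} : Finset V) := by
    have mem_ends {x : V} (hx : β ∈ missingColors G c x)
        (hux : (kempeGraph G c α β).Reachable u x) :
        x ∈ ({x | x ∈ K.supp ∧ (kempeGraph G c α β).degree x ≤ 1} : Finset V) :=
      mem_filter.2 ⟨mem_univ x, SimpleGraph.ConnectedComponent.sound hux.symm,
        hc.degree_kempeGraph_le_one hx⟩
    simp only [insert_subset_iff, singleton_subset_iff]
    exact ⟨mem_ends hu .rfl, mem_ends hv huv, mem_ends hw huw⟩
  have three_le := card_le_card ends_subset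
  rw [card_eq_three.2 ⟨u, v, w, hne_v, hne_w, hvw, rfl⟩] at three_le
  have := card_degree_le_one_le_two (fun x ↦ hc.degree_kempeGraph_le_two (v := x) α β) K
  omega

theorem IsMissingTransversal.isExtendable [Finite V] {G : SimpleGraph V} {c : Sym2 V → C}
    {N : Set V} {φ : V → C} {f : V} {α : C} (hc : IsProperEdgeColoring G c)
    (hφ : IsMissingTransversal G c (N \ {f}) φ) (hf : f ∈ N) (hα : α ∉ φ '' (N \ {f}))
    (hmissing : ∀ v ∈ N, (missingColors G c v).Nontrivial) : IsExtendable G C N := by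
  classical
  by_contra hN
  let W := {w // ∃ ψ, Shifts G c N φ f ψ w}
  have exists_holder (w : W) : ∃ h : W, h.1 ∈ N \ {f} ∧ φ h ∈ missingColors G c w ∧
      φ h ≠ φ w ∧ (kempeGraph G c α (φ h)).Reachable h w := by
    obtain ⟨w, ψ, hs⟩ := w
    obtain ⟨h, hh, hhw, hne⟩ := hs.exists_holder hc hφ hf hN (hmissing w (hs.hole_mem hf))
    exact ⟨⟨h, hs.exists_shifts_of_mem_missingColors hh.1 hhw⟩, hh, hhw, hne,
      hs.reachable_hole hc hφ hf hα hN hh hhw⟩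
  choose holder holder_mem missing_hole color_ne reachable using exists_holder
  have not_surjective : ¬Surjective holder := fun hsurj ↦ by
    obtain ⟨w, hw⟩ := hsurj ⟨f, φ, .refl⟩
    exact (holder_mem w).2 (congrArg Subtype.val hw)
  obtain ⟨w₁, w₂, same_holder, hne⟩ : ∃ w₁ w₂, holder w₁ = holder w₂ ∧ w₁ ≠ w₂ := by
    rw [← Finite.injective_iff_surjective] at not_surjective
    simpa [Injective] using not_surjective
  have holder_ne (w : W) : (holder w).1 ≠ w := fun h ↦ color_ne w (congrArg φ h)
  refine hne (Subtype.ext ?_)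
  exact hc.eq_of_reachable_of_reachable (hφ.mem_missingColors _ (holder_mem w₁))
    (missing_hole w₁) (same_holder ▸ missing_hole w₂) (reachable w₁)
    (same_holder ▸ reachable w₂) (holder_ne w₁) (same_holder ▸ holder_ne w₂)

theorem IsProperEdgeColoring.isExtendable [Fintype V] [Fintype C] {G : SimpleGraph V}
    [DecidableRel G.Adj] {c : Sym2 V → C} (hc : IsProperEdgeColoring G c) (N : Finset V)
    (hN : #N ≤ Fintype.card C) (hdeg : ∀ v ∈ N, G.degree v + 1 < Fintype.card C) :
    IsExtendable G C N := by
  classical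
  induction N using Finset.induction_on with
  | empty => exact ⟨c, fun v ↦ c s(v, v), hc, by simp, by simp⟩
  | insert f N hf ih =>
    rw [card_insert_of_notMem hf] at hN
    obtain ⟨c', φ, hc', hφ⟩ := ih (by omega) fun v hv ↦ hdeg v (mem_insert_of_mem hv)
    have sdiff_eq : ((insert f N : Finset V) : Set V) \ {f} = N := by simp [hf]
    obtain ⟨α, -, hα⟩ : ∃ α ∈ univ, α ∉ N.image φ :=
      exists_mem_notMem_of_card_lt_card (card_image_le.trans_lt (by rwa [card_univ]))
    refine IsMissingTransversal.isExtendable (f := f) (α := α) (φ := φ) hc' ?_ (by simp) ?_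
      fun v hv ↦ nontrivial_missingColors c' (hdeg v hv)
    · rwa [sdiff_eq]
    · rwa [sdiff_eq, ← coe_image, mem_coe]

open Classical in
/-- The coloring that gives the edges `s(x, w)` the color `φ w` and all other edges their color
under `c`. -/
noncomputable def starColoring (c : Sym2 V → C) (x : V) (φ : V → C) : Sym2 V → C :=
  Sym2.lift ⟨fun v w ↦ if v = x then φ w else if w = x then φ v else c s(v, w), fun v w ↦ by
    grind [Sym2.eq_swap (a := v) (b := w)]⟩

theorem IsProperEdgeColoring.starColoring {G : SimpleGraph V} {c : Sym2 V → C} {x : V}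
    {φ : V → C} (hc : IsProperEdgeColoring (G.deleteIncidenceSet x) c)
    (hφ : IsMissingTransversal (G.deleteIncidenceSet x) c (G.neighborSet x) φ) :
    IsProperEdgeColoring G (starColoring c x φ) := by
  have missing {v w : V} (hv : G.Adj v x) (hw : G.Adj v w) (hwx : w ≠ x) : c s(v, w) ≠ φ v :=
    hφ.mem_missingColors v hv.symm w
      (SimpleGraph.deleteIncidenceSet_adj.2 ⟨hw, hv.ne, hwx⟩)
  intro v w w' hw hw' h
  simp only [Vizing.starColoring, Sym2.lift_mk] at h
  by_cases hvx : v = x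
  · subst hvx
    simp only [if_true] at h
    exact hφ.injOn hw hw' h
  · simp only [hvx, if_false] at h
    split_ifs at h with hwx hwx' hwx'
    · rw [hwx, hwx']
    · exact absurd h.symm (missing (hwx ▸ hw) hw' hwx')
    · exact absurd h (missing (hwx' ▸ hw') hw hwx)
    · exact hc (SimpleGraph.deleteIncidenceSet_adj.2 ⟨hw, hvx, hwx⟩)
        (SimpleGraph.deleteIncidenceSet_adj.2 ⟨hw', hvx, hwx'⟩) h

theorem degree_deleteIncidenceSet_lt [Fintype V] [DecidableEq V] {G : SimpleGraph V}
    [DecidableRel G.Adj] {x v : V} (hxv : G.Adj x v) :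
    (G.deleteIncidenceSet x).degree v < G.degree v := by
  refine card_lt_card ((ssubset_iff_of_subset fun w hw ↦ ?_).2 ⟨x, ?_, ?_⟩)
  · rw [SimpleGraph.mem_neighborFinset] at hw ⊢
    exact G.deleteIncidenceSet_le x hw
  · simpa using hxv.symm
  · simp [SimpleGraph.deleteIncidenceSet_adj]

theorem exists_isProperEdgeColoring [Fintype V] [Fintype C] (G : SimpleGraph V)
    [DecidableRel G.Adj] (hdeg : ∀ v, G.degree v < Fintype.card C) :
    ∃ c : Sym2 V → C, IsProperEdgeColoring G c := by
  classical
  induction G using WellFoundedLT.induction generalizing ‹DecidableRel G.Adj› with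
  | ind G ih =>
    by_cases hG : ∃ x w, G.Adj x w
    · obtain ⟨x, w, hxw⟩ := hG
      have delete_lt : G.deleteIncidenceSet x < G :=
        (G.deleteIncidenceSet_le x).lt_of_not_ge fun hle ↦
          (SimpleGraph.deleteIncidenceSet_adj.1 (hle hxw)).2.1 rfl
      obtain ⟨c, hc⟩ := ih _ delete_lt fun v ↦
        (SimpleGraph.degree_le_of_le (G.deleteIncidenceSet_le x)).trans_lt (hdeg v)
      obtain ⟨c', φ, hc', hφ⟩ := hc.isExtendable (G.neighborFinset x) (hdeg x).le fun v hv ↦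
        (Nat.succ_le_of_lt (degree_deleteIncidenceSet_lt (by simpa using hv))).trans_lt (hdeg v)
      rw [SimpleGraph.coe_neighborFinset] at hφ
      exact ⟨_, hc'.starColoring hφ⟩
    · have nonempty_C (e : Sym2 V) : Nonempty C := Fintype.card_pos_iff.1 (hdeg e.out.1).pos
      exact ⟨fun e ↦ (nonempty_C e).some, fun v w _ hvw ↦ absurd ⟨v, w, hvw⟩ hG⟩

end Vizing

/-- Vizing's theorem: every simple graph with maximum degree `Δ` admits a proper edge
coloring with at most `Δ + 1` colors. -/
theorem vizing {V : Type*} [Fintype V] (G : SimpleGraph V) [DecidableRel G.Adj] :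
    ∃ C : G.edgeSet → Fin (G.maxDegree + 1),
      ∀ e f : G.edgeSet, e ≠ f →
        (∃ v : V, v ∈ (e : Sym2 V) ∧ v ∈ (f : Sym2 V)) → C e ≠ C f := by
  obtain ⟨c, hc⟩ := Vizing.exists_isProperEdgeColoring (C := Fin (G.maxDegree + 1)) G fun v ↦ by
    simpa [Nat.lt_succ_iff] using G.degree_le_maxDegree v
  refine ⟨fun e ↦ c e, ?_⟩
  rintro ⟨e, he⟩ ⟨f, hf⟩ hef ⟨v, ⟨w, rfl⟩, ⟨w', rfl⟩⟩ hcolor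
  obtain rfl : w = w' := hc he hf hcolor
  exact hef rfl
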